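/- Let G be a finite multigraph (multiple edges allowed, no loops) and let k be an odd positive integer. Then ⌈Δ(G)/k⌉ ≤ χ'_k(G) ≤ ch'_k(G) ≤ ⌈3·Δ(G)/(3k − 1)⌉. -/

import Mathlib

open SimpleGraph

/-- A multigraph on vertex type `V` with edge index type `E`: each edge has a pair of
distinct endpoints (no loops); several edges may share the same endpoints. -/
structure Multigraph (V : Type*) (E : Type*) where
  ends : E → Sym2 V
  no_loops : ∀ e, ¬ (ends e).IsDiag

/-- The degree of a vertex of a multigraph: the number of edges incident with it. -/
noncomputable def Multigraph.degree {V E : Type*} (G : Multigraph V E) (v : V) : ℕ :=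
  {e : E | v ∈ G.ends e}.ncard

/-- The maximum degree `Δ(G)` of a multigraph. -/
noncomputable def Multigraph.maxDegree {V E : Type*} [Fintype V] (G : Multigraph V E) : ℕ :=
  Finset.univ.sup fun v => G.degree v

/-- A `k`-frugal edge colouring: no colour appears more than `k` times on the edges
incident with any vertex. -/
def Multigraph.IsFrugalEdgeColoring {V E α : Type*} (G : Multigraph V E) (k : ℕ)
    (c : E → α) : Prop :=
  ∀ (v : V) (a : α), {e : E | v ∈ G.ends e ∧ c e = a}.ncard ≤ k

/-- The `k`-frugal chromatic index `χ'_k(G)`: the least number of colours in a `k`-frugal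
edge colouring of `G`. -/
noncomputable def Multigraph.frugalChromaticIndex {V E : Type*} (G : Multigraph V E)
    (k : ℕ) : ℕ :=
  sInf {n : ℕ | ∃ c : E → ℕ, (∀ e, c e < n) ∧ G.IsFrugalEdgeColoring k c}

/-- The `k`-frugal edge choice number `ch'_k(G)`: the least `t` such that every assignment
of lists of `t` colours to the edges admits a `k`-frugal edge colouring from the lists. -/
noncomputable def Multigraph.frugalEdgeChoiceNumber {V E : Type*} (G : Multigraph V E)
    (k : ℕ) : ℕ :=
  sInf {t : ℕ | ∀ L : E → Finset ℤ, (∀ e, (L e).card = t) →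
    ∃ c : E → ℤ, (∀ e, c e ∈ L e) ∧ G.IsFrugalEdgeColoring k c}

section
open Finset
open scoped Classical

variable {E A B V α : Type*}

/-- Stable matchings exist for a bipartite multigraph whose edge `e` joins `l e` to `r e`, when
every left vertex ranks its edges by `p` and every right vertex by `q`. -/
theorem exists_stable_matching (l : E → A) (r : E → B) (p q : E → ℕ) (T : Finset E)
    (hp : ∀ e ∈ T, ∀ f ∈ T, l e = l f → p e = p f → e = f)
    (hq : ∀ e ∈ T, ∀ f ∈ T, r e = r f → q e = q f → e = f) :
    ∃ K ⊆ T, (∀ e ∈ K, ∀ f ∈ K, l e = l f → e = f) ∧ (∀ e ∈ K, ∀ f ∈ K, r e = r f → e = f) ∧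
      ∀ e ∈ T, e ∉ K → (∃ f ∈ K, l f = l e ∧ p f < p e) ∨ (∃ f ∈ K, r f = r e ∧ q f < q e) := by
  induction T using Finset.strongInduction with
  | H T ih =>
    by_cases hC : ∀ e ∈ T, ∀ f ∈ T, (∀ g ∈ T, l g = l e → p e ≤ p g) →
        (∀ g ∈ T, l g = l f → p f ≤ p g) → r e = r f → e = f
    · refine ⟨{e ∈ T | ∀ g ∈ T, l g = l e → p e ≤ p g}, filter_subset _ _, ?_, ?_, ?_⟩
      · intro e he f hf hef
        rw [mem_filter] at he hf
        exact hp e he.1 f hf.1 hef (le_antisymm (he.2 f hf.1 hef.symm) (hf.2 e he.1 hef))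
      · intro e he f hf hef
        rw [mem_filter] at he hf
        exact hC e he.1 f hf.1 he.2 hf.2 hef
      · intro e he heK
        left
        obtain ⟨f, hf, hmin⟩ := exists_min_image {g ∈ T | l g = l e} p ⟨e, by simp [he]⟩
        simp only [mem_filter] at hf hmin heK
        refine ⟨f, ?_, hf.2, ?_⟩
        · rw [mem_filter]
          exact ⟨hf.1, fun g hg hgf => hmin g ⟨hg, hgf.trans hf.2⟩⟩
        · by_contra hlt
          exact heK ⟨he, fun g hg hge => (not_lt.1 hlt).trans (hmin g ⟨hg, hge⟩)⟩
    · push Not at hC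
      obtain ⟨e, f, he, hf, hre, hne, hemin, hlt⟩ : ∃ e f, e ∈ T ∧ f ∈ T ∧ r e = r f ∧ e ≠ f ∧
          (∀ g ∈ T, l g = l e → p e ≤ p g) ∧ q e < q f := by
        obtain ⟨e, he, f, hf, h1, h2, h3, h4⟩ := hC
        rcases lt_trichotomy (q e) (q f) with h | h | h
        · exact ⟨e, f, he, hf, h3, h4, h1, h⟩
        · exact absurd (hq e he f hf h3 h) h4
        · exact ⟨f, e, hf, he, h3.symm, h4.symm, h2, h⟩
      obtain ⟨K, hKT, hKl, hKr, hK⟩ := ih (T.erase f) (erase_ssubset hf)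
        (fun a ha b hb => hp a (mem_of_mem_erase ha) b (mem_of_mem_erase hb))
        (fun a ha b hb => hq a (mem_of_mem_erase ha) b (mem_of_mem_erase hb))
      refine ⟨K, hKT.trans (erase_subset _ _), hKl, hKr, fun g hg hgK => ?_⟩
      by_cases hgf : g = f
      · subst hgf
        right
        by_cases heK : e ∈ K
        · exact ⟨e, heK, hre, hlt⟩
        · rcases hK e (mem_erase.2 ⟨hne, he⟩) heK with ⟨g', hg', hl, hp'⟩ | ⟨g', hg', hr, hq'⟩
          · exact absurd hp' (not_lt.2 (hemin g' (mem_of_mem_erase (hKT hg')) hl))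
          · exact ⟨g', hg', hr.trans hre, hq'.trans hlt⟩
      · exact hK g (mem_erase.2 ⟨hgf, hg⟩) hgK

/-- Galvin's argument: if every edge has more colours in its list than there are edges
preferred to it at its two ends, then a proper colouring from the lists exists. -/
theorem exists_list_coloring_of_ranks [Nonempty α] (l : E → A) (r : E → B) (p q : E → ℕ)
    (s : Finset E) (hp : ∀ e ∈ s, ∀ f ∈ s, l e = l f → p e = p f → e = f)
    (hq : ∀ e ∈ s, ∀ f ∈ s, r e = r f → q e = q f → e = f) (L : E → Finset α)
    (hL : ∀ e ∈ s, #{f ∈ s | l f = l e ∧ p f < p e} + #{f ∈ s | r f = r e ∧ q f < q e} < #(L e)) :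
    ∃ c : E → α, (∀ e ∈ s, c e ∈ L e) ∧
      ∀ e ∈ s, ∀ f ∈ s, c e = c f → (l e = l f ∨ r e = r f) → e = f := by
  induction s using Finset.strongInduction generalizing L with
  | H s ih =>
    rcases s.eq_empty_or_nonempty with rfl | ⟨e₀, he₀⟩
    · exact ⟨fun _ => Classical.arbitrary α, by simp, by simp⟩
    obtain ⟨a, ha⟩ : (L e₀).Nonempty := card_pos.1 ((Nat.zero_le _).trans_lt (hL e₀ he₀))
    obtain ⟨K, hKT, hKl, hKr, hK⟩ := exists_stable_matching l r p q {e ∈ s | a ∈ L e}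
      (fun e he f hf => hp e (mem_filter.1 he).1 f (mem_filter.1 hf).1)
      (fun e he f hf => hq e (mem_filter.1 he).1 f (mem_filter.1 hf).1)
    have hKs : K ⊆ s := hKT.trans (filter_subset _ _)
    have hKne : K.Nonempty := by
      by_cases h : e₀ ∈ K
      · exact ⟨_, h⟩
      · rcases hK e₀ (mem_filter.2 ⟨he₀, ha⟩) h with ⟨f, hf, _⟩ | ⟨f, hf, _⟩ <;> exact ⟨f, hf⟩
    obtain ⟨c, hc, hcp⟩ := ih (s \ K) (sdiff_ssubset hKs hKne)
      (fun e he f hf => hp e (mem_sdiff.1 he).1 f (mem_sdiff.1 hf).1)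
      (fun e he f hf => hq e (mem_sdiff.1 he).1 f (mem_sdiff.1 hf).1)
      (fun e => (L e).erase a) (by
        intro e he
        obtain ⟨hes, heK⟩ := mem_sdiff.1 he
        have h1 : #{f ∈ s \ K | l f = l e ∧ p f < p e} ≤ #{f ∈ s | l f = l e ∧ p f < p e} :=
          card_le_card (filter_subset_filter _ sdiff_subset)
        have h2 : #{f ∈ s \ K | r f = r e ∧ q f < q e} ≤ #{f ∈ s | r f = r e ∧ q f < q e} :=
          card_le_card (filter_subset_filter _ sdiff_subset)
        have h3 := hL e hes
        by_cases hae : a ∈ L e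
        · rw [card_erase_of_mem hae]
          rcases hK e (mem_filter.2 ⟨hes, hae⟩) heK with ⟨g, hg, hgl, hgp⟩ | ⟨g, hg, hgl, hgp⟩
          · have : #{f ∈ s \ K | l f = l e ∧ p f < p e} < #{f ∈ s | l f = l e ∧ p f < p e} :=
              card_lt_card ⟨filter_subset_filter _ sdiff_subset, fun h => by
                have := h (mem_filter.2 ⟨hKs hg, hgl, hgp⟩)
                simp [hg] at this⟩
            omega
          · have : #{f ∈ s \ K | r f = r e ∧ q f < q e} < #{f ∈ s | r f = r e ∧ q f < q e} :=
              card_lt_card ⟨filter_subset_filter _ sdiff_subset, fun h => by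
                have := h (mem_filter.2 ⟨hKs hg, hgl, hgp⟩)
                simp [hg] at this⟩
            omega
        · rw [erase_eq_of_notMem hae]
          omega)
    refine ⟨fun e => if e ∈ K then a else c e, fun e he => ?_, fun e he f hf hef hlr => ?_⟩
    · by_cases heK : e ∈ K
      · simpa [heK] using (mem_filter.1 (hKT heK)).2
      · simpa [heK] using mem_of_mem_erase (hc e (mem_sdiff.2 ⟨he, heK⟩))
    · have hca : ∀ g ∈ s, g ∉ K → c g ≠ a := fun g hg hgK =>
        (mem_erase.1 (hc g (mem_sdiff.2 ⟨hg, hgK⟩))).1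
      by_cases heK : e ∈ K <;> by_cases hfK : f ∈ K <;>
        simp only [heK, hfK, if_true, if_false] at hef
      · exact hlr.elim (hKl e heK f hfK) (hKr e heK f hfK)
      · exact absurd hef.symm (hca f hf hfK)
      · exact absurd hef (hca e he heK)
      · exact hcp e (mem_sdiff.2 ⟨he, heK⟩) f (mem_sdiff.2 ⟨hf, hfK⟩) hef hlr

/-- If at least as many left as right vertices have maximum degree `D`, then some nonempty matching
`M` covers, together with a left vertex, all its neighbours that do not have smaller degree. -/
theorem exists_matching_of_card_le (l : E → A) (r : E → B) (s : Finset E) (D : ℕ)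
    (hr : ∀ e ∈ s, #{f ∈ s | r f = r e} ≤ D)
    (hne : {u ∈ s.image l | #{f ∈ s | l f = u} = D}.Nonempty)
    (hcard : #{w ∈ s.image r | #{f ∈ s | r f = w} = D} ≤
      #{u ∈ s.image l | #{f ∈ s | l f = u} = D}) :
    ∃ M ⊆ s, M.Nonempty ∧ (∀ e ∈ M, ∀ f ∈ M, l e = l f → e = f) ∧
      (∀ e ∈ M, ∀ f ∈ M, r e = r f → e = f) ∧
      ∀ f ∈ s, (∃ e ∈ M, l e = l f) →
        (∃ e ∈ M, r e = r f) ∨ #{g ∈ s | r g = r f} < #{g ∈ s | l g = l f} := by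
  set P := {u ∈ s.image l | #{f ∈ s | l f = u} = D} with hP
  set Q := {w ∈ s.image r | #{f ∈ s | r f = w} = D} with hQ
  let N : Finset A → Finset B := fun S => {w ∈ Q | ∃ e ∈ s, l e ∈ S ∧ r e = w}
  obtain ⟨S, hS, hSmin⟩ := exists_min_image {S ∈ P.powerset | S.Nonempty ∧ #(N S) ≤ #S} card
    ⟨P, by
      simp only [mem_filter, mem_powerset, subset_refl, true_and]
      exact ⟨hne, (card_le_card (filter_subset _ _)).trans hcard⟩⟩
  simp only [mem_filter, mem_powerset] at hS hSmin
  obtain ⟨hSP, hSne, hNS⟩ := hS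
  have hdeg : ∀ f ∈ s, l f ∈ S → r f ∈ N S ∨ #{g ∈ s | r g = r f} < #{g ∈ s | l g = l f} := by
    intro f hf hlf
    rcases (hr f hf).lt_or_eq with h | h
    · right
      rw [(mem_filter.1 (hSP hlf)).2]
      exact h
    · left
      exact mem_filter.2 ⟨mem_filter.2 ⟨mem_image_of_mem _ hf, h⟩, f, hf, hlf, rfl⟩
  rcases hNS.lt_or_eq with hlt | heq
  · obtain ⟨u, hu⟩ := hSne
    have hSu : S = {u} := by
      by_contra hSu
      have hne' : (S.erase u).Nonempty := by
        rw [nonempty_iff_ne_empty]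
        intro h
        rcases (erase_eq_empty_iff _ _).1 h with h | h
        · simp [h] at hu
        · exact hSu h
      have := hSmin (S.erase u) ⟨(erase_subset _ _).trans hSP, hne', by
        rw [card_erase_of_mem hu]
        have : #(N (S.erase u)) ≤ #(N S) := card_le_card (by
          intro w hw
          obtain ⟨h1, e, h2, h3, h4⟩ := mem_filter.1 hw
          exact mem_filter.2 ⟨h1, e, h2, mem_of_mem_erase h3, h4⟩)
        omega⟩
      rw [card_erase_of_mem hu] at this
      have := card_pos.2 ⟨u, hu⟩
      omega
    have hNe : N S = ∅ := by
      rw [← card_eq_zero]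
      rw [hSu, card_singleton] at hlt
      rw [hSu]
      omega
    obtain ⟨e, he, hle⟩ := mem_image.1 (mem_filter.1 (hSP hu)).1
    refine ⟨{e}, by simpa using he, by simp, by simp, by simp, ?_⟩
    intro f hf ⟨e', he', hl'⟩
    rw [mem_singleton] at he'
    subst he'
    right
    rcases hdeg f hf (by rw [← hl', hle]; exact hu) with h | h
    · simp [hNe] at h
    · exact h
  · have hall : ∀ W : Finset (N S),
        #W ≤ #(W.biUnion fun w => {u ∈ S | ∃ e ∈ s, l e = u ∧ r e = w.1}) := by
      intro W
      by_contra hW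
      push Not at hW
      set U := W.biUnion fun w => {u ∈ S | ∃ e ∈ s, l e = u ∧ r e = w.1} with hU
      have hUS : U ⊆ S := by
        intro u hu
        simp only [hU, mem_biUnion, mem_filter] at hu
        obtain ⟨_, _, h, _⟩ := hu
        exact h
      have hWne : W.Nonempty := card_pos.1 ((Nat.zero_le _).trans_lt hW)
      have hUne : U.Nonempty := by
        obtain ⟨w, hw⟩ := hWne
        obtain ⟨_, e, he, hle, hre⟩ := mem_filter.1 w.2
        refine ⟨l e, mem_biUnion.2 ⟨w, hw, mem_filter.2 ⟨hle, e, he, rfl, hre⟩⟩⟩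
      have hWc : #W ≤ #(N S) := by simpa using card_le_univ W
      have hNsub : N (S \ U) ⊆ N S \ W.map ⟨Subtype.val, Subtype.val_injective⟩ := by
        intro w hw
        obtain ⟨h1, e, h2, h3, h4⟩ := mem_filter.1 hw
        obtain ⟨h5, h6⟩ := mem_sdiff.1 h3
        refine mem_sdiff.2 ⟨mem_filter.2 ⟨h1, e, h2, h5, h4⟩, fun h => h6 ?_⟩
        obtain ⟨w', hw', rfl⟩ := mem_map.1 h
        exact mem_biUnion.2 ⟨w', hw', mem_filter.2 ⟨h5, e, h2, rfl, h4⟩⟩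
      have hN := card_le_card hNsub
      rw [card_sdiff_of_subset, card_map] at hN
      swap
      · intro w hw
        obtain ⟨w', _, rfl⟩ := mem_map.1 hw
        exact w'.2
      have hSU := card_sdiff_of_subset hUS
      have hUpos := card_pos.2 hUne
      have hUle := card_le_card hUS
      have := hSmin (S \ U) ⟨sdiff_subset.trans hSP, card_pos.1 (by omega), by omega⟩
      omega
    obtain ⟨φ, hφ, hφm⟩ := (all_card_le_biUnion_card_iff_exists_injective
      fun w : N S => {u ∈ S | ∃ e ∈ s, l e = u ∧ r e = w.1}).1 hall
    have hφ' : ∀ w : N S, ∃ e ∈ s, l e = φ w ∧ r e = w.1 := fun w => (mem_filter.1 (hφm w)).2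
    choose ψ hψs hψl hψr using hφ'
    have himg : univ.image φ = S := eq_of_subset_of_card_le
      (image_subset_iff.2 fun w _ => (mem_filter.1 (hφm w)).1) (by
        rw [card_image_of_injective _ hφ, card_univ, Fintype.card_coe, heq])
    refine ⟨univ.image ψ, image_subset_iff.2 fun w _ => hψs w, ?_, ?_, ?_, ?_⟩
    · obtain ⟨u, hu⟩ := hSne
      rw [← himg] at hu
      obtain ⟨w, _, _⟩ := mem_image.1 hu
      exact ⟨ψ w, mem_image_of_mem _ (mem_univ _)⟩
    · simp only [mem_image, mem_univ, true_and]
      rintro _ ⟨w, rfl⟩ _ ⟨w', rfl⟩ h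
      rw [hψl, hψl] at h
      rw [hφ h]
    · simp only [mem_image, mem_univ, true_and]
      rintro _ ⟨w, rfl⟩ _ ⟨w', rfl⟩ h
      rw [hψr, hψr] at h
      rw [Subtype.ext h]
    · simp only [mem_image, mem_univ, true_and]
      rintro f hf ⟨_, ⟨w, rfl⟩, h⟩
      rw [hψl] at h
      rcases hdeg f hf (by rw [← h]; exact (mem_filter.1 (hφm w)).1) with hN | hlt
      · exact Or.inl ⟨_, ⟨⟨r f, hN⟩, rfl⟩, hψr _⟩
      · exact Or.inr hlt

/-- Edge rankings on `s \ M` extend to `s` by putting the matching `M` first at left vertices and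
last at right vertices. -/
theorem exists_ranks_of_sdiff (l : E → A) (r : E → B) (s M : Finset E) (hMs : M ⊆ s)
    (hMl : ∀ e ∈ M, ∀ f ∈ M, l e = l f → e = f) (hMr : ∀ e ∈ M, ∀ f ∈ M, r e = r f → e = f)
    (hM : ∀ f ∈ s, (∃ e ∈ M, l e = l f) →
        (∃ e ∈ M, r e = r f) ∨ #{g ∈ s | r g = r f} < #{g ∈ s | l g = l f})
    (ih : ∃ p q : E → ℕ,
      (∀ e ∈ s \ M, ∀ f ∈ s \ M, l e = l f → p e = p f → e = f) ∧
      (∀ e ∈ s \ M, ∀ f ∈ s \ M, r e = r f → q e = q f → e = f) ∧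
      ∀ e ∈ s \ M, #{f ∈ s \ M | l f = l e ∧ p f < p e} + #{f ∈ s \ M | r f = r e ∧ q f < q e} <
        max #{f ∈ s \ M | l f = l e} #{f ∈ s \ M | r f = r e}) :
    ∃ p q : E → ℕ,
      (∀ e ∈ s, ∀ f ∈ s, l e = l f → p e = p f → e = f) ∧
      (∀ e ∈ s, ∀ f ∈ s, r e = r f → q e = q f → e = f) ∧
      ∀ e ∈ s, #{f ∈ s | l f = l e ∧ p f < p e} + #{f ∈ s | r f = r e ∧ q f < q e} <
        max #{f ∈ s | l f = l e} #{f ∈ s | r f = r e} := by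
  obtain ⟨p, q, hp, hq, h⟩ := ih
  have hqs : ∀ e ∈ s, q e < s.sup q + 1 := fun e he => Nat.lt_succ_of_le (le_sup he)
  refine ⟨fun e => if e ∈ M then 0 else p e + 1, fun e => if e ∈ M then s.sup q + 1 else q e,
    ?_, ?_, ?_⟩
  · intro e he f hf hl hpe
    by_cases heM : e ∈ M <;> by_cases hfM : f ∈ M <;>
      simp only [heM, hfM, if_true, if_false] at hpe
    · exact hMl e heM f hfM hl
    · omega
    · omega
    · exact hp e (mem_sdiff.2 ⟨he, heM⟩) f (mem_sdiff.2 ⟨hf, hfM⟩) hl (by omega)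
  · intro e he f hf hl hpe
    have h1 := hqs e he
    have h2 := hqs f hf
    by_cases heM : e ∈ M <;> by_cases hfM : f ∈ M <;>
      simp only [heM, hfM, if_true, if_false] at hpe
    · exact hMr e heM f hfM hl
    · omega
    · omega
    · exact hq e (mem_sdiff.2 ⟨he, heM⟩) f (mem_sdiff.2 ⟨hf, hfM⟩) hl (by omega)
  · intro e he
    beta_reduce
    by_cases heM : e ∈ M
    · simp only [heM, if_true, not_lt_zero, and_false, filter_false, card_empty, zero_add]
      refine lt_max_of_lt_right (card_lt_card ⟨fun f hf => ?_, fun hsub => ?_⟩)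
      · obtain ⟨h1, h2, _⟩ := mem_filter.1 hf
        exact mem_filter.2 ⟨h1, h2⟩
      · have := hsub (mem_filter.2 ⟨he, rfl⟩)
        have := (mem_filter.1 this).2.2
        rw [if_pos heM] at this
        exact lt_irrefl _ this
    · have hes : e ∈ s \ M := mem_sdiff.2 ⟨he, heM⟩
      have hr' : #{f ∈ s | r f = r e ∧ (if f ∈ M then s.sup q + 1 else q f) <
          (if e ∈ M then s.sup q + 1 else q e)} ≤ #{f ∈ s \ M | r f = r e ∧ q f < q e} := by
        refine card_le_card fun f hf => ?_
        obtain ⟨h1, h2, h3⟩ := mem_filter.1 hf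
        have h4 := hqs e he
        by_cases hfM : f ∈ M <;> simp only [heM, hfM, if_true, if_false] at h3
        · omega
        · exact mem_filter.2 ⟨mem_sdiff.2 ⟨h1, hfM⟩, h2, h3⟩
      have hl' : {f ∈ s | l f = l e ∧ (if f ∈ M then 0 else p f + 1) <
          (if e ∈ M then 0 else p e + 1)} ⊆
          {f ∈ s \ M | l f = l e ∧ p f < p e} ∪ {f ∈ M | l f = l e} := by
        intro f hf
        obtain ⟨h1, h2, h3⟩ := mem_filter.1 hf
        by_cases hfM : f ∈ M <;> simp only [heM, hfM, if_true, if_false] at h3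
        · exact mem_union_right _ (mem_filter.2 ⟨hfM, h2⟩)
        · exact mem_union_left _ (mem_filter.2 ⟨mem_sdiff.2 ⟨h1, hfM⟩, h2, by omega⟩)
      have hl'' := (card_le_card hl').trans (card_union_le _ _)
      have hM1 : #{f ∈ M | l f = l e} ≤ 1 := card_le_one.2 fun a ha b hb => by
        rw [mem_filter] at ha hb
        exact hMl a ha.1 b hb.1 (ha.2.trans hb.2.symm)
      have hsplit : ∀ P : E → Prop, #{f ∈ s | P f} = #{f ∈ s \ M | P f} + #{f ∈ M | P f} := by
        intro P
        rw [← card_union_of_disjoint, ← filter_union, sdiff_union_of_subset hMs]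
        exact disjoint_filter_filter sdiff_disjoint
      have hdl := hsplit (fun f => l f = l e)
      have hdr := hsplit (fun f => r f = r e)
      have hmain := h e hes
      rcases Nat.eq_zero_or_pos #{f ∈ M | l f = l e} with h0 | h0
      · have : max #{f ∈ s \ M | l f = l e} #{f ∈ s \ M | r f = r e} ≤
            max #{f ∈ s | l f = l e} #{f ∈ s | r f = r e} := max_le_max (by omega) (by omega)
        omega
      · obtain ⟨g, hg⟩ := card_pos.1 h0
        rw [mem_filter] at hg
        have hcov := hM e he ⟨g, hg⟩
        have : max #{f ∈ s \ M | l f = l e} #{f ∈ s \ M | r f = r e} + 1 ≤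
            max #{f ∈ s | l f = l e} #{f ∈ s | r f = r e} := by
          rcases hcov with ⟨g', hg', hgr⟩ | hlt
          · have : 0 < #{f ∈ M | r f = r e} := card_pos.2 ⟨g', mem_filter.2 ⟨hg', hgr⟩⟩
            omega
          · omega
        omega

/-- The edges of a bipartite multigraph can be ranked at all vertices so that the ranks of every
edge at its two ends add up to less than the larger of the degrees of its ends. -/
theorem exists_ranks (l : E → A) (r : E → B) (s : Finset E) :
    ∃ p q : E → ℕ,
      (∀ e ∈ s, ∀ f ∈ s, l e = l f → p e = p f → e = f) ∧
      (∀ e ∈ s, ∀ f ∈ s, r e = r f → q e = q f → e = f) ∧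
      ∀ e ∈ s, #{f ∈ s | l f = l e ∧ p f < p e} + #{f ∈ s | r f = r e ∧ q f < q e} <
        max #{f ∈ s | l f = l e} #{f ∈ s | r f = r e} := by
  induction s using Finset.strongInduction with
  | H s ih =>
    rcases s.eq_empty_or_nonempty with rfl | hs
    · exact ⟨fun _ => 0, fun _ => 0, by simp, by simp, by simp⟩
    obtain ⟨e, he, hmax⟩ :=
      exists_max_image s (fun e => max #{f ∈ s | l f = l e} #{f ∈ s | r f = r e}) hs
    obtain ⟨D, hD⟩ : ∃ D, D = max #{f ∈ s | l f = l e} #{f ∈ s | r f = r e} := ⟨_, rfl⟩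
    rw [← hD] at hmax
    have hl : ∀ f ∈ s, #{g ∈ s | l g = l f} ≤ D := fun f hf => (le_max_left _ _).trans (hmax f hf)
    have hr : ∀ f ∈ s, #{g ∈ s | r g = r f} ≤ D := fun f hf => (le_max_right _ _).trans (hmax f hf)
    have hpos : 0 < #{u ∈ s.image l | #{f ∈ s | l f = u} = D} ∨
        0 < #{w ∈ s.image r | #{f ∈ s | r f = w} = D} := by
      rcases max_choice #{f ∈ s | l f = l e} #{f ∈ s | r f = r e} with h | h
      · exact Or.inl (card_pos.2 ⟨l e, mem_filter.2 ⟨mem_image_of_mem _ he, by rw [hD, h]⟩⟩)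
      · exact Or.inr (card_pos.2 ⟨r e, mem_filter.2 ⟨mem_image_of_mem _ he, by rw [hD, h]⟩⟩)
    rcases le_total #{w ∈ s.image r | #{f ∈ s | r f = w} = D}
      #{u ∈ s.image l | #{f ∈ s | l f = u} = D} with hc | hc
    · obtain ⟨M, hMs, hMne, hMl, hMr, hM⟩ :=
        exists_matching_of_card_le l r s D hr (card_pos.1 (by omega)) hc
      exact exists_ranks_of_sdiff l r s M hMs hMl hMr hM (ih _ (sdiff_ssubset hMs hMne))
    · obtain ⟨M, hMs, hMne, hMr, hMl, hM⟩ :=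
        exists_matching_of_card_le r l s D hl (card_pos.1 (by omega)) hc
      obtain ⟨p, q, hp, hq, h⟩ := ih _ (sdiff_ssubset hMs hMne)
      obtain ⟨q', p', hq', hp', hlt⟩ := exists_ranks_of_sdiff r l s M hMs hMr hMl hM
        ⟨q, p, hq, hp, fun e he => by rw [add_comm, max_comm]; exact h e he⟩
      exact ⟨p', q', hp', hq', fun e he => by rw [add_comm, max_comm]; exact hlt e he⟩

/-- A bipartite multigraph is edge-colourable from lists that are, for every edge, at least as
large as the degrees of its two ends. -/
theorem exists_list_coloring_of_bipartite [Nonempty α] (l : E → A) (r : E → B) (s : Finset E)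
    (L : E → Finset α) (hl : ∀ e ∈ s, #{f ∈ s | l f = l e} ≤ #(L e))
    (hr : ∀ e ∈ s, #{f ∈ s | r f = r e} ≤ #(L e)) :
    ∃ c : E → α, (∀ e ∈ s, c e ∈ L e) ∧
      ∀ e ∈ s, ∀ f ∈ s, c e = c f → (l e = l f ∨ r e = r f) → e = f := by
  obtain ⟨p, q, hp, hq, h⟩ := exists_ranks l r s
  exact exists_list_coloring_of_ranks l r p q s hp hq L fun e he =>
    (h e he).trans_le (max_le (hl e he) (hr e he))

/-- Every multigraph, loops allowed, has an orientation in which in- and out-degrees differ by at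
most one at every vertex. -/
theorem exists_balanced_orientation (s : Finset E) (x y : E → V) :
    ∃ x' y' : E → V, (∀ e ∈ s, (x' e = x e ∧ y' e = y e) ∨ (x' e = y e ∧ y' e = x e)) ∧
      ∀ v, |∑ e ∈ s, ((if x' e = v then 1 else 0) - (if y' e = v then 1 else 0) : ℤ)| ≤ 1 := by
  induction s using Finset.strongInduction generalizing x y with
  | H s ih =>
    by_cases hs : ∃ e ∈ s, ∃ f ∈ s, e ≠ f ∧ ∃ v, (x e = v ∨ y e = v) ∧ (x f = v ∨ y f = v)
    · obtain ⟨e, he, f, hf, hef, v, hev, hfv⟩ := hs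
      obtain ⟨a, ha⟩ : ∃ a, (x e = a ∧ y e = v) ∨ (x e = v ∧ y e = a) := by
        rcases hev with h | h
        · exact ⟨y e, Or.inr ⟨h, rfl⟩⟩
        · exact ⟨x e, Or.inl ⟨rfl, h⟩⟩
      obtain ⟨b, hb⟩ : ∃ b, (x f = b ∧ y f = v) ∨ (x f = v ∧ y f = b) := by
        rcases hfv with h | h
        · exact ⟨y f, Or.inr ⟨h, rfl⟩⟩
        · exact ⟨x f, Or.inl ⟨rfl, h⟩⟩
      obtain ⟨x', y', ho, hbal⟩ := ih (s.erase f) (erase_ssubset hf)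
        (Function.update x e a) (Function.update y e b)
      have hes : e ∈ s.erase f := mem_erase.2 ⟨hef, he⟩
      have hrest : ∀ g ∈ (s.erase f).erase e,
          (x' g = x g ∧ y' g = y g) ∨ (x' g = y g ∧ y' g = x g) := by
        intro g hg
        have := ho g (mem_of_mem_erase hg)
        rwa [Function.update_of_ne (ne_of_mem_erase hg),
          Function.update_of_ne (ne_of_mem_erase hg)] at this
      have hoe := ho e hes
      rw [Function.update_self, Function.update_self] at hoe
      -- insert `v` in the middle of the oriented lifted edge
      obtain ⟨e₁, e₂, hx, hy, hxy⟩ : ∃ e₁ e₂ : V × V,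
          ((e₁.1 = x e ∧ e₁.2 = y e) ∨ (e₁.1 = y e ∧ e₁.2 = x e)) ∧
          ((e₂.1 = x f ∧ e₂.2 = y f) ∨ (e₂.1 = y f ∧ e₂.2 = x f)) ∧
          ((e₁ = (x' e, v) ∧ e₂ = (v, y' e)) ∨ (e₁ = (v, y' e) ∧ e₂ = (x' e, v))) := by
        rcases hoe with ⟨h1, h2⟩ | ⟨h1, h2⟩
        · refine ⟨(a, v), (v, b), ?_, ?_, Or.inl ⟨by rw [h1], by rw [h2]⟩⟩
          · rcases ha with h | h <;> simp [h]
          · rcases hb with h | h <;> simp [h]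
        · refine ⟨(v, a), (b, v), ?_, ?_, Or.inr ⟨by rw [h2], by rw [h1]⟩⟩
          · rcases ha with h | h <;> simp [h]
          · rcases hb with h | h <;> simp [h]
      refine ⟨fun g => if g = e then e₁.1 else if g = f then e₂.1 else x' g,
        fun g => if g = e then e₁.2 else if g = f then e₂.2 else y' g, ?_, ?_⟩
      · intro g hg
        by_cases hge : g = e
        · subst hge
          simpa using hx
        · by_cases hgf : g = f
          · subst hgf
            simpa [hge] using hy
          · simpa [hge, hgf] using hrest g (mem_erase.2 ⟨hge, mem_erase.2 ⟨hgf, hg⟩⟩)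
      · intro w
        refine le_of_eq_of_le (congrArg _ ?_) (hbal w)
        rw [← add_sum_erase s _ hf, ← add_sum_erase _ _ hes, ← add_sum_erase _ _ hes, ← add_assoc]
        congr 1
        · rcases hxy with ⟨h1, h2⟩ | ⟨h1, h2⟩ <;> simp [h1, h2, hef.symm]
        · refine sum_congr rfl fun g hg => ?_
          beta_reduce
          rw [if_neg (ne_of_mem_erase hg), if_neg (ne_of_mem_erase (mem_of_mem_erase hg)),
            if_neg (ne_of_mem_erase hg), if_neg (ne_of_mem_erase (mem_of_mem_erase hg))]
    · refine ⟨x, y, fun e _ => Or.inl ⟨rfl, rfl⟩, fun v => ?_⟩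
      by_cases hv : ∃ e ∈ s, x e = v ∨ y e = v
      · obtain ⟨e, he, hev⟩ := hv
        rw [sum_eq_single_of_mem e he]
        · split_ifs <;> simp
        · intro f hf hfe
          have h1 : x f ≠ v := fun h => hs ⟨e, he, f, hf, hfe.symm, v, hev, Or.inl h⟩
          have h2 : y f ≠ v := fun h => hs ⟨e, he, f, hf, hfe.symm, v, hev, Or.inr h⟩
          simp [h1, h2]
      · push Not at hv
        rw [sum_eq_zero]
        · simp
        · intro f hf
          simp [(hv f hf).1, (hv f hf).2]

/-- The vertices of a loopless multigraph can be split into two classes so that every vertex has at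
most half of its edges inside its own class. -/
theorem exists_cut [Fintype V] (s : Finset E) (x y : E → V) (hxy : ∀ e, x e ≠ y e) :
    ∃ σ : V → Bool, ∀ v, 2 * #{e ∈ s | (x e = v ∨ y e = v) ∧ σ (x e) = σ (y e)} ≤
      #{e ∈ s | x e = v ∨ y e = v} := by
  obtain ⟨σ, -, hσ⟩ := exists_min_image (univ : Finset (V → Bool))
    (fun σ => #{e ∈ s | σ (x e) = σ (y e)}) univ_nonempty
  refine ⟨σ, fun v => ?_⟩
  have hmin := hσ (Function.update σ v (!σ v)) (mem_univ _)
  have hsplit : ∀ (P : E → Prop) [DecidablePred P], #{e ∈ s | P e} =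
      #{e ∈ s | (x e = v ∨ y e = v) ∧ P e} + #{e ∈ s | ¬ (x e = v ∨ y e = v) ∧ P e} := by
    intro P _
    rw [← card_filter_add_card_filter_not (s := {e ∈ s | P e}) (fun e => x e = v ∨ y e = v),
      filter_filter, filter_filter]
    simp only [and_comm]
  have hflip : {e ∈ s | (x e = v ∨ y e = v) ∧
      Function.update σ v (!σ v) (x e) = Function.update σ v (!σ v) (y e)} =
      {e ∈ s | (x e = v ∨ y e = v) ∧ ¬ σ (x e) = σ (y e)} := by
    refine filter_congr fun e _ => and_congr_right fun h => ?_
    rcases h with h | h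
    · rw [h, Function.update_self, Function.update_of_ne (h ▸ (hxy e).symm)]
      cases σ v <;> cases σ (y e) <;> simp
    · rw [h, Function.update_self, Function.update_of_ne (h ▸ hxy e)]
      cases σ v <;> cases σ (x e) <;> simp
  have hkeep : {e ∈ s | ¬ (x e = v ∨ y e = v) ∧
      Function.update σ v (!σ v) (x e) = Function.update σ v (!σ v) (y e)} =
      {e ∈ s | ¬ (x e = v ∨ y e = v) ∧ σ (x e) = σ (y e)} := by
    refine filter_congr fun e _ => and_congr_right fun h => ?_
    rw [not_or] at h
    rw [Function.update_of_ne h.1, Function.update_of_ne h.2]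
  rw [hsplit (fun e => σ (x e) = σ (y e)), hsplit (fun e =>
    Function.update σ v (!σ v) (x e) = Function.update σ v (!σ v) (y e)), hflip, hkeep] at hmin
  have hv := card_filter_add_card_filter_not (s := {e ∈ s | x e = v ∨ y e = v})
    (fun e => σ (x e) = σ (y e))
  rw [filter_filter, filter_filter] at hv
  omega

/-- Greedy edge-colouring from lists, with a set `F v` of colours forbidden at every vertex `v`. -/
theorem exists_list_coloring_greedy [Nonempty α] (s : Finset E) (x y : E → V)
    (F : V → Finset α) (L : E → Finset α)
    (hL : ∀ e ∈ s, (#(F (x e)) + #{f ∈ s | x f = x e ∨ y f = x e}) +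
      (#(F (y e)) + #{f ∈ s | x f = y e ∨ y f = y e}) ≤ #(L e)) :
    ∃ c : E → α, (∀ e ∈ s, c e ∈ L e ∧ c e ∉ F (x e) ∧ c e ∉ F (y e)) ∧
      ∀ v, ∀ e ∈ s, ∀ f ∈ s, c e = c f → (x e = v ∨ y e = v) → (x f = v ∨ y f = v) → e = f := by
  induction s using Finset.induction_on with
  | empty => exact ⟨fun _ => Classical.arbitrary α, by simp, by simp⟩
  | insert e s hes ih =>
    have hmono : ∀ v, #{f ∈ s | x f = v ∨ y f = v} ≤ #{f ∈ insert e s | x f = v ∨ y f = v} :=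
      fun v => card_le_card (filter_subset_filter _ (subset_insert _ _))
    obtain ⟨c, hc, hcp⟩ := ih fun f hf => by
      have := hL f (mem_insert_of_mem hf)
      have := hmono (x f)
      have := hmono (y f)
      omega
    have hlt : ∀ v, (x e = v ∨ y e = v) →
        #{f ∈ s | x f = v ∨ y f = v} < #{f ∈ insert e s | x f = v ∨ y f = v} := fun v hv =>
      card_lt_card ⟨filter_subset_filter _ (subset_insert _ _), fun h =>
        hes (mem_filter.1 (h (mem_filter.2 ⟨mem_insert_self _ _, hv⟩))).1⟩
    let U : V → Finset α := fun v => F v ∪ {f ∈ s | x f = v ∨ y f = v}.image c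
    have hU : ∀ v, #(U v) ≤ #(F v) + #{f ∈ s | x f = v ∨ y f = v} := fun v =>
      (card_union_le _ _).trans (Nat.add_le_add_left card_image_le _)
    obtain ⟨a, haL, haU⟩ : ∃ a ∈ L e, a ∉ U (x e) ∪ U (y e) := by
      refine exists_mem_notMem_of_card_lt_card ?_
      have := hL e (mem_insert_self _ _)
      have := hlt (x e) (Or.inl rfl)
      have := hlt (y e) (Or.inr rfl)
      have := hU (x e)
      have := hU (y e)
      have := card_union_le (U (x e)) (U (y e))
      omega
    rw [mem_union, not_or] at haU
    have hne : ∀ f ∈ s, f ≠ e := fun f hf h => hes (h ▸ hf)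
    have hav : ∀ v, (x e = v ∨ y e = v) → a ∉ U v := by
      rintro v (rfl | rfl)
      exacts [haU.1, haU.2]
    have haf : ∀ v, ∀ f ∈ s, (x e = v ∨ y e = v) → (x f = v ∨ y f = v) → c f ≠ a :=
      fun v f hf hev hfv h => hav v hev
        (mem_union_right _ (mem_image.2 ⟨f, mem_filter.2 ⟨hf, hfv⟩, h⟩))
    refine ⟨fun f => if f = e then a else c f, fun f hf => ?_, fun v f hf g hg hfg hfv hgv => ?_⟩
    · rcases mem_insert.1 hf with rfl | hfs
      · beta_reduce
        rw [if_pos rfl]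
        exact ⟨haL, fun h => haU.1 (mem_union_left _ h), fun h => haU.2 (mem_union_left _ h)⟩
      · beta_reduce
        rw [if_neg (hne f hfs)]
        exact hc f hfs
    · beta_reduce at hfg
      rcases mem_insert.1 hf with rfl | hfs <;> rcases mem_insert.1 hg with rfl | hgs
      · rfl
      · rw [if_pos rfl, if_neg (hne g hgs)] at hfg
        exact absurd hfg.symm (haf v g hgs hfv hgv)
      · rw [if_pos rfl, if_neg (hne f hfs)] at hfg
        exact absurd hfg (haf v f hfs hgv hfv)
      · rw [if_neg (hne f hfs), if_neg (hne g hgs)] at hfg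
        exact hcp v f hfs g hgs hfg hfv hgv

/-- A Shannon-type bound for edge-colouring a loopless multigraph from lists, with a set `F v` of
colours forbidden at every vertex `v`. -/
theorem exists_list_coloring_avoiding [Nonempty α] [Fintype V] (s : Finset E) (x y : E → V)
    (hxy : ∀ e, x e ≠ y e) (F : V → Finset α) (L : E → Finset α) (d h : ℕ) (hhd : h ≤ d)
    (hd : ∀ v, #{e ∈ s | x e = v ∨ y e = v} + #(F v) ≤ d)
    (hh : ∀ v, #{e ∈ s | x e = v ∨ y e = v} / 2 + #(F v) ≤ h)
    (hL : ∀ e ∈ s, d + h ≤ #(L e)) :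
    ∃ c : E → α, (∀ e ∈ s, c e ∈ L e ∧ c e ∉ F (x e) ∧ c e ∉ F (y e)) ∧
      ∀ v, ∀ e ∈ s, ∀ f ∈ s, c e = c f → (x e = v ∨ y e = v) → (x f = v ∨ y f = v) → e = f := by
  obtain ⟨σ, hσ⟩ := exists_cut s x y hxy
  let R := {e ∈ s | σ (x e) = σ (y e)}
  let T := {e ∈ s | ¬ σ (x e) = σ (y e)}
  have hRv : ∀ v, #{e ∈ R | x e = v ∨ y e = v} + #(F v) ≤ h := by
    intro v
    have h1 := hσ v
    have h2 := hh v
    have h3 : #{e ∈ R | x e = v ∨ y e = v} =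
        #{e ∈ s | (x e = v ∨ y e = v) ∧ σ (x e) = σ (y e)} := by
      rw [filter_filter]
      simp only [and_comm]
    omega
  have hRT : ∀ v, #{e ∈ R | x e = v ∨ y e = v} + #{e ∈ T | x e = v ∨ y e = v} + #(F v) ≤ d := by
    intro v
    have h1 := card_filter_add_card_filter_not (s := {e ∈ s | x e = v ∨ y e = v})
      (fun e => σ (x e) = σ (y e))
    rw [filter_comm, filter_comm (fun e => x e = v ∨ y e = v)] at h1
    have := hd v
    simp only [R, T]
    omega
  obtain ⟨c₁, hc₁, hcp₁⟩ := exists_list_coloring_greedy R x y F L fun e he => by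
    have := hL e (mem_filter.1 he).1
    have := hRv (x e)
    have := hRv (y e)
    omega
  let U : V → Finset α := fun v => F v ∪ {f ∈ R | x f = v ∨ y f = v}.image c₁
  have hU : ∀ v, #(U v) ≤ #{f ∈ R | x f = v ∨ y f = v} + #(F v) := fun v =>
    ((card_union_le _ _).trans (Nat.add_le_add_left card_image_le _)).trans_eq (add_comm _ _)
  let l : E → V := fun e => if σ (x e) then x e else y e
  let r : E → V := fun e => if σ (x e) then y e else x e
  have hlr : ∀ e, (l e = x e ∧ r e = y e) ∨ (l e = y e ∧ r e = x e) := by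
    intro e
    by_cases he : σ (x e) = true <;> simp [l, r, he]
  have hL' : ∀ e ∈ s, ∀ u w, (u = x e ∧ w = y e) ∨ (u = y e ∧ w = x e) →
      #{f ∈ T | x f = u ∨ y f = u} ≤ #(L e \ (U (x e) ∪ U (y e))) := by
    intro e he u w huw
    have h1 := le_card_sdiff (U (x e) ∪ U (y e)) (L e)
    have h2 := card_union_le (U (x e)) (U (y e))
    have h3 := hL e he
    have h4 := hU u
    have h5 := hU w
    have h6 := hRT u
    have h7 := hRv w
    rcases huw with ⟨rfl, rfl⟩ | ⟨rfl, rfl⟩ <;> omega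
  obtain ⟨c₂, hc₂, hcp₂⟩ := exists_list_coloring_of_bipartite l r T
    (fun e => L e \ (U (x e) ∪ U (y e)))
    (fun e he => (card_le_card (fun f hf => by
      obtain ⟨h1, h2⟩ := mem_filter.1 hf
      refine mem_filter.2 ⟨h1, ?_⟩
      rw [← h2]
      rcases hlr f with h | h <;> simp [h])).trans (hL' e (mem_filter.1 he).1 (l e) (r e) (hlr e)))
    (fun e he => (card_le_card (fun f hf => by
      obtain ⟨h1, h2⟩ := mem_filter.1 hf
      refine mem_filter.2 ⟨h1, ?_⟩
      rw [← h2]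
      rcases hlr f with h | h <;> simp [h])).trans
        (hL' e (mem_filter.1 he).1 (r e) (l e) ((hlr e).symm.imp And.symm And.symm)))
  have hT : ∀ e ∈ s, e ∉ R → e ∈ T := fun e he heR =>
    mem_filter.2 ⟨he, fun h => heR (mem_filter.2 ⟨he, h⟩)⟩
  have hc₂' : ∀ e ∈ T, c₂ e ∈ L e ∧ c₂ e ∉ U (x e) ∧ c₂ e ∉ U (y e) := by
    intro e he
    have := hc₂ e he
    rwa [mem_sdiff, mem_union, not_or] at this
  have hcross : ∀ v, ∀ e ∈ T, ∀ f ∈ R, (x e = v ∨ y e = v) → (x f = v ∨ y f = v) →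
      c₂ e ≠ c₁ f := by
    intro v e he f hf hev hfv hef
    have hmem : c₂ e ∈ U v :=
      mem_union_right _ (mem_image.2 ⟨f, mem_filter.2 ⟨hf, hfv⟩, hef.symm⟩)
    rcases hev with rfl | rfl
    exacts [(hc₂' e he).2.1 hmem, (hc₂' e he).2.2 hmem]
  have hside : ∀ v, ∀ e ∈ T, (x e = v ∨ y e = v) →
      (l e = v ∧ σ v = true) ∨ (r e = v ∧ σ v = false) := by
    intro v e he hev
    have hne := (mem_filter.1 he).2
    rcases hev with rfl | rfl
    · cases hx : σ (x e) <;> simp [l, r, hx]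
    · cases hx : σ (x e) <;> cases hy : σ (y e) <;> simp [l, r, hx, hy] at hne ⊢
  refine ⟨fun e => if e ∈ R then c₁ e else c₂ e, fun e he => ?_,
    fun v e he f hf hef hev hfv => ?_⟩
  · by_cases heR : e ∈ R
    · simpa only [heR, if_true] using hc₁ e heR
    · obtain ⟨h1, h2, h3⟩ := hc₂' e (hT e he heR)
      simp only [heR, if_false]
      exact ⟨h1, fun h => h2 (mem_union_left _ h), fun h => h3 (mem_union_left _ h)⟩
  · by_cases heR : e ∈ R <;> by_cases hfR : f ∈ R <;>
      simp only [heR, hfR, if_true, if_false] at hef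
    · exact hcp₁ v e heR f hfR hef hev hfv
    · exact absurd hef.symm (hcross v f (hT f hf hfR) e heR hfv hev)
    · exact absurd hef (hcross v e (hT e he heR) f hfR hev hfv)
    · refine hcp₂ e (hT e he heR) f (hT f hf hfR) hef ?_
      rcases hside v e (hT e he heR) hev with ⟨h1, h2⟩ | ⟨h1, h2⟩ <;>
        rcases hside v f (hT f hf hfR) hfv with ⟨h3, h4⟩ | ⟨h3, h4⟩
      · exact Or.inl (h1.trans h3.symm)
      · simp [h2] at h4
      · simp [h2] at h4
      · exact Or.inr (h1.trans h3.symm)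

/-- A proper bipartite edge-colouring with `ℓ * t` colours, cut into `ℓ` groups of `t` matchings,
gives a colouring from lists of size `t` that uses every colour at most `ℓ` times at each vertex. -/
theorem exists_list_coloring_of_groups [Nonempty α] (x y : E → V) (s : Finset E) (col : E → ℕ)
    (hx : ∀ e ∈ s, ∀ f ∈ s, col e = col f → x e = x f → e = f)
    (hy : ∀ e ∈ s, ∀ f ∈ s, col e = col f → y e = y f → e = f) (ℓ t : ℕ)
    (hcol : ∀ e ∈ s, col e < t * ℓ) (L : E → Finset α) (hL : ∀ e ∈ s, t ≤ #(L e)) :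
    ∃ c : E → α, (∀ e ∈ s, c e ∈ L e) ∧
      (∀ v a, #{e ∈ s | x e = v ∧ c e = a} ≤ ℓ) ∧ ∀ v a, #{e ∈ s | y e = v ∧ c e = a} ≤ ℓ := by
  have hgroup : ∀ z : E → V, (∀ e ∈ s, ∀ f ∈ s, col e = col f → z e = z f → e = f) →
      ∀ g v, #{f ∈ {e ∈ s | col e / t = g} | z f = v} ≤ t := by
    intro z hz g v
    have hcard : #(Ico (t * g) (t * g + t)) = t := by simp
    refine (card_le_card_of_injOn col (fun e he => ?_) fun e he f hf hef => ?_).trans_eq hcard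
    · obtain ⟨⟨hes, heg⟩, -⟩ : (e ∈ s ∧ col e / t = g) ∧ z e = v := by simpa using he
      have htpos : 0 < t := Nat.pos_of_ne_zero fun h => by simpa [h] using hcol e hes
      have hdiv := Nat.div_add_mod (col e) t
      have hmod := Nat.mod_lt (col e) htpos
      rw [heg] at hdiv
      exact mem_coe.2 (mem_Ico.2 (by omega))
    · obtain ⟨⟨hes, -⟩, hev⟩ : (e ∈ s ∧ col e / t = g) ∧ z e = v := by simpa using he
      obtain ⟨⟨hfs, -⟩, hfv⟩ : (f ∈ s ∧ col f / t = g) ∧ z f = v := by simpa using hf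
      exact hz e hes f hfs hef (hev.trans hfv.symm)
  choose c hc hcp using fun g => exists_list_coloring_of_bipartite x y {e ∈ s | col e / t = g} L
    (fun e he => (hgroup x hx g (x e)).trans (hL e (mem_filter.1 he).1))
    (fun e he => (hgroup y hy g (y e)).trans (hL e (mem_filter.1 he).1))
  have hcount : ∀ z : E → V, (∀ e f, z e = z f → x e = x f ∨ y e = y f) →
      ∀ v a, #{e ∈ s | z e = v ∧ c (col e / t) e = a} ≤ ℓ := by
    intro z hz v a
    refine (card_le_card_of_injOn (t := range ℓ) (fun e => col e / t) (fun e he => ?_)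
      fun e he f hf hef => ?_).trans_eq (card_range ℓ)
    · obtain ⟨hes, -⟩ := mem_filter.1 (mem_coe.1 he)
      exact mem_coe.2 (mem_range.2 (Nat.div_lt_of_lt_mul (hcol e hes)))
    · obtain ⟨hes, hev, hea⟩ := mem_filter.1 (mem_coe.1 he)
      obtain ⟨hfs, hfv, hfa⟩ := mem_filter.1 (mem_coe.1 hf)
      beta_reduce at hef
      rw [← hef] at hfa
      exact hcp (col e / t) e (mem_filter.2 ⟨hes, rfl⟩) f (mem_filter.2 ⟨hfs, hef.symm⟩)
        (hea.trans hfa.symm) (hz e f (hev.trans hfv.symm))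
  exact ⟨fun e => c (col e / t) e, fun e he => hc _ e (mem_filter.2 ⟨he, rfl⟩),
    hcount x fun _ _ => Or.inl, hcount y fun _ _ => Or.inr⟩

/-- In a loopless multigraph, the degree is the sum of the out-degree and the in-degree. -/
theorem card_filter_ends (s : Finset E) (x y : E → V) (hxy : ∀ e, x e ≠ y e) (v : V) :
    #{e ∈ s | x e = v ∨ y e = v} = #{e ∈ s | x e = v} + #{e ∈ s | y e = v} := by
  rw [filter_or, card_union_of_disjoint]
  exact disjoint_filter.2 fun e _ h1 h2 => hxy e (h1.trans h2.symm)

/-- Frugal edge-colouring from lists of an oriented loopless multigraph with bounded out-degrees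
and in-degrees. -/
theorem exists_frugal_list_coloring_of_orientation [Nonempty α] [Fintype V] [Fintype E]
    (x y : E → V) (hxy : ∀ e, x e ≠ y e) (ℓ t r h : ℕ) (hrht : r + h ≤ t) (hhr : h ≤ r)
    (h2h : 2 * h ≤ r + 1) (hx : ∀ v, #{e | x e = v} ≤ t * ℓ + h)
    (hy : ∀ v, #{e | y e = v} ≤ t * ℓ + h)
    (hdeg : ∀ v, #{e | x e = v ∨ y e = v} ≤ 2 * (t * ℓ) + r)
    (L : E → Finset α) (hL : ∀ e, t ≤ #(L e)) :
    ∃ c : E → α, (∀ e, c e ∈ L e) ∧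
      ∀ v a, #{e | (x e = v ∨ y e = v) ∧ c e = a} ≤ 2 * ℓ + 1 := by
  obtain ⟨col, hcol, hcolp⟩ := exists_list_coloring_of_bipartite x y univ
    (fun _ => range (t * ℓ + h)) (fun e _ => by simpa using hx (x e))
    (fun e _ => by simpa using hy (y e))
  have hcolx : ∀ e f, col e = col f → x e = x f → e = f := fun e f h1 h2 =>
    hcolp e (mem_univ _) f (mem_univ _) h1 (Or.inl h2)
  have hcoly : ∀ e f, col e = col f → y e = y f → e = f := fun e f h1 h2 =>
    hcolp e (mem_univ _) f (mem_univ _) h1 (Or.inr h2)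
  let S : Finset E := {e | col e < t * ℓ}
  let D : Finset E := {e | ¬ col e < t * ℓ}
  obtain ⟨c₁, hc₁, hc₁x, hc₁y⟩ := exists_list_coloring_of_groups x y S col
    (fun e _ f _ => hcolx e f) (fun e _ f _ => hcoly e f) ℓ t (fun e he => (mem_filter.1 he).2) L
    (fun e _ => hL e)
  have hSv : ∀ v a, #{e ∈ S | (x e = v ∨ y e = v) ∧ c₁ e = a} ≤ 2 * ℓ := by
    intro v a
    have h1 := hc₁x v a
    have h2 := hc₁y v a
    simp only [or_and_right, filter_or]
    exact (card_union_le _ _).trans (by omega)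
  have hmaps : ∀ v (z : E → V), ∀ e ∈ {e ∈ D | z e = v}, col e ∈ Ico (t * ℓ) (t * ℓ + h) := by
    intro v z e he
    exact mem_Ico.2 ⟨not_lt.1 (mem_filter.1 (mem_filter.1 he).1).2,
      mem_range.1 (hcol e (mem_univ _))⟩
  have hDz : ∀ z : E → V, (∀ e f, col e = col f → z e = z f → e = f) →
      ∀ v, #{e ∈ D | z e = v} ≤ h := by
    intro z hz v
    have hcard : #(Ico (t * ℓ) (t * ℓ + h)) = h := by simp
    refine (card_le_card_of_injOn col (hmaps v z) fun e he f hf hef => ?_).trans_eq hcard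
    exact hz e f hef ((mem_filter.1 (mem_coe.1 he)).2.trans (mem_filter.1 (mem_coe.1 hf)).2.symm)
  have hDx := hDz x hcolx
  have hDy := hDz y hcoly
  have hDxy := card_filter_ends D x y hxy
  let M : Finset E := {e ∈ D | col e = t * ℓ ∧ r < #{f ∈ D | x f = x e ∨ y f = x e}}
  have hMx : ∀ v, #{e ∈ M | x e = v} ≤ 1 := fun v => card_le_one.2 fun e he f hf => by
    obtain ⟨he, hev⟩ := mem_filter.1 he
    obtain ⟨hf, hfv⟩ := mem_filter.1 hf
    exact hcolx e f ((mem_filter.1 he).2.1.trans (mem_filter.1 hf).2.1.symm) (hev.trans hfv.symm)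
  have hMy : ∀ v, #{e ∈ M | y e = v} ≤ 1 := fun v => card_le_one.2 fun e he f hf => by
    obtain ⟨he, hev⟩ := mem_filter.1 he
    obtain ⟨hf, hfv⟩ := mem_filter.1 hf
    exact hcoly e f ((mem_filter.1 he).2.1.trans (mem_filter.1 hf).2.1.symm) (hev.trans hfv.symm)
  have hown : ∀ v, r < #{f ∈ D | x f = v ∨ y f = v} → 0 < #{e ∈ M | x e = v} := by
    intro v hv
    have h1 := hDx v
    have h2 := hDy v
    have h3 := hDxy v
    have himage : {e ∈ D | x e = v}.image col = Ico (t * ℓ) (t * ℓ + h) := by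
      refine eq_of_subset_of_card_le (image_subset_iff.2 (hmaps v x)) ?_
      rw [card_image_of_injOn fun e he f hf hef => hcolx e f hef
        ((mem_filter.1 (mem_coe.1 he)).2.trans (mem_filter.1 (mem_coe.1 hf)).2.symm),
        Nat.card_Ico]
      omega
    have hmem : t * ℓ ∈ {e ∈ D | x e = v}.image col := himage ▸ mem_Ico.2 (by omega)
    obtain ⟨e, he, hecol⟩ := mem_image.1 hmem
    obtain ⟨heD, rfl⟩ := mem_filter.1 he
    exact card_pos.2 ⟨e, mem_filter.2 ⟨mem_filter.2 ⟨heD, hecol, hv⟩, rfl⟩⟩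
  have hfree : ∀ e ∈ M, ∃ a ∈ L e,
      #{f ∈ S | (x f = x e ∨ y f = x e) ∧ c₁ f = a} < 2 * ℓ := by
    intro e he
    by_contra! hall
    have h1 : #(L e) * (2 * ℓ) ≤ #{f ∈ S | x f = x e ∨ y f = x e} := by
      rw [← smul_eq_mul]
      refine (card_nsmul_le_sum (L e) _ _ hall).trans ?_
      simp only [← filter_filter]
      refine (le_of_eq ?_).trans (card_filter_le _ fun f => c₁ f ∈ L e)
      convert sum_card_fiberwise_eq_card_filter _ _ _
    have h2 : #{f ∈ S | x f = x e ∨ y f = x e} + #{f ∈ D | x f = x e ∨ y f = x e} =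
        #{f | x f = x e ∨ y f = x e} := by
      have hsplit := card_filter_add_card_filter_not (s := {f | x f = x e ∨ y f = x e})
        (fun f => col f < t * ℓ)
      rwa [filter_comm, filter_comm (fun f => x f = x e ∨ y f = x e)] at hsplit
    have h3 := (mem_filter.1 he).2.2
    have h4 := hdeg (x e)
    have h5 := Nat.mul_le_mul_right (2 * ℓ) (hL e)
    have h6 : t * (2 * ℓ) = 2 * (t * ℓ) := by ring
    omega
  choose! a₀ ha₀L ha₀ using hfree
  let F : V → Finset α := fun w => {e ∈ M | y e = w}.image a₀
  have hF : ∀ v, #(F v) ≤ #{e ∈ M | y e = v} := fun v => card_image_le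
  have hH : ∀ v, #{e ∈ D \ M | x e = v ∨ y e = v} + (#{e ∈ M | x e = v} + #{e ∈ M | y e = v}) =
      #{e ∈ D | x e = v ∨ y e = v} := by
    intro v
    rw [← card_filter_ends M x y hxy, ← card_union_of_disjoint
      (disjoint_filter_filter sdiff_disjoint), ← filter_union,
      sdiff_union_of_subset (filter_subset _ _)]
  obtain ⟨c₂, hc₂, hcp₂⟩ := exists_list_coloring_avoiding (D \ M) x y hxy F L r h hhr
    (fun v => by
      have := hDx v
      have := hDy v
      have := hDxy v
      have := hown v
      have := hF v
      have := hH v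
      omega)
    (fun v => by
      have := hDx v
      have := hDy v
      have := hDxy v
      have := hown v
      have := hF v
      have := hH v
      have := hMy v
      omega)
    (fun e _ => hrht.trans (hL e))
  have hcases : ∀ e, e ∈ S ∨ (e ∉ S ∧ e ∈ M) ∨ (e ∉ S ∧ e ∉ M ∧ e ∈ D \ M) := by
    intro e
    by_cases heS : e ∈ S
    · exact Or.inl heS
    · by_cases heM : e ∈ M
      · exact Or.inr (Or.inl ⟨heS, heM⟩)
      · refine Or.inr (Or.inr ⟨heS, heM, mem_sdiff.2 ⟨mem_filter.2 ⟨mem_univ _, fun h => ?_⟩, heM⟩⟩)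
        exact heS (mem_filter.2 ⟨mem_univ _, h⟩)
  refine ⟨fun e => if e ∈ S then c₁ e else if e ∈ M then a₀ e else c₂ e, fun e => ?_,
    fun v a => ?_⟩
  · rcases hcases e with heS | ⟨heS, heM⟩ | ⟨heS, heM, heH⟩
    · simpa only [heS, if_true] using hc₁ e heS
    · simpa only [heS, heM, if_true, if_false] using ha₀L e heM
    · simpa only [heS, heM, if_false] using (hc₂ e heH).1
  let P : Finset E := {e ∈ S | (x e = v ∨ y e = v) ∧ c₁ e = a} ∪ {e ∈ M | x e = v ∧ a₀ e = a}
  let Q : Finset E := {e ∈ M | y e = v ∧ a₀ e = a} ∪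
    {e ∈ D \ M | (x e = v ∨ y e = v) ∧ c₂ e = a}
  have hP : #P ≤ 2 * ℓ := by
    rcases eq_empty_or_nonempty {e ∈ M | x e = v ∧ a₀ e = a} with hempty | ⟨e, he⟩
    · simp only [P, hempty, union_empty]
      exact hSv v a
    · obtain ⟨heM, rfl, rfl⟩ := mem_filter.1 he
      have h1 := ha₀ e heM
      have h2 : #{f ∈ M | x f = x e ∧ a₀ f = a₀ e} ≤ 1 := (card_le_card fun f hf =>
        mem_filter.2 ⟨(mem_filter.1 hf).1, (mem_filter.1 hf).2.1⟩).trans (hMx (x e))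
      exact (card_union_le _ _).trans (by omega)
  have hmix : ∀ e ∈ M, ∀ f ∈ D \ M, y e = v → (x f = v ∨ y f = v) → a₀ e ≠ c₂ f := by
    intro e he f hf hev hfv hef
    have hmem : c₂ f ∈ F v := mem_image.2 ⟨e, mem_filter.2 ⟨he, hev⟩, hef⟩
    rcases hfv with rfl | rfl
    exacts [(hc₂ f hf).2.1 hmem, (hc₂ f hf).2.2 hmem]
  have hQ : #Q ≤ 1 := by
    refine card_le_one.2 fun e he f hf => ?_
    rcases mem_union.1 he with he | he <;> rcases mem_union.1 hf with hf | hf <;>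
      obtain ⟨he, hev, hea⟩ := mem_filter.1 he <;> obtain ⟨hf, hfv, hfa⟩ := mem_filter.1 hf
    · exact card_le_one.1 (hMy v) e (mem_filter.2 ⟨he, hev⟩) f (mem_filter.2 ⟨hf, hfv⟩)
    · exact absurd (hea.trans hfa.symm) (hmix e he f hf hev hfv)
    · exact absurd (hfa.trans hea.symm) (hmix f hf e he hfv hev)
    · exact hcp₂ v e he f hf (hea.trans hfa.symm) hev hfv
  refine (card_le_card (t := P ∪ Q) fun e he => ?_).trans
    ((card_union_le P Q).trans (add_le_add hP hQ))
  obtain ⟨-, hev, hea⟩ := mem_filter.1 he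
  rcases hcases e with heS | ⟨heS, heM⟩ | ⟨heS, heM, heH⟩
  · simp only [heS, if_true] at hea
    exact mem_union_left _ (mem_union_left _ (mem_filter.2 ⟨heS, hev, hea⟩))
  · simp only [heS, heM, if_true, if_false] at hea
    rcases hev with hev | hev
    · exact mem_union_left _ (mem_union_right _ (mem_filter.2 ⟨heM, hev, hea⟩))
    · exact mem_union_right _ (mem_union_left _ (mem_filter.2 ⟨heM, hev, hea⟩))
  · simp only [heS, heM, if_false] at hea
    exact mem_union_right _ (mem_union_right _ (mem_filter.2 ⟨heH, hev, hea⟩))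

/-- Edges of a loopless multigraph of maximum degree at most `2 * (t * ℓ) + r`, where
`3 * r ≤ 2 * t`, can be coloured from lists of size `t` with every colour used at
most `2 * ℓ + 1` times at each vertex. -/
theorem exists_frugal_list_coloring [Nonempty α] [Fintype V] [Fintype E]
    (x y : E → V) (hxy : ∀ e, x e ≠ y e) (ℓ t r : ℕ) (hrt : 3 * r ≤ 2 * t)
    (hdeg : ∀ v, #{e | x e = v ∨ y e = v} ≤ 2 * (t * ℓ) + r)
    (L : E → Finset α) (hL : ∀ e, t ≤ #(L e)) :
    ∃ c : E → α, (∀ e, c e ∈ L e) ∧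
      ∀ v a, #{e | (x e = v ∨ y e = v) ∧ c e = a} ≤ 2 * ℓ + 1 := by
  obtain ⟨x', y', hends, hbal⟩ := exists_balanced_orientation univ x y
  have hinc : ∀ e v, (x e = v ∨ y e = v) ↔ (x' e = v ∨ y' e = v) := by
    intro e v
    rcases hends e (mem_univ _) with ⟨h1, h2⟩ | ⟨h1, h2⟩ <;> rw [h1, h2]
    exact or_comm
  have hxy' : ∀ e, x' e ≠ y' e := by
    intro e
    rcases hends e (mem_univ _) with ⟨h1, h2⟩ | ⟨h1, h2⟩ <;> rw [h1, h2]
    exacts [hxy e, (hxy e).symm]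
  simp only [hinc] at hdeg ⊢
  have hside : ∀ v, #{e | x' e = v} ≤ t * ℓ + (r + 1) / 2 ∧
      #{e | y' e = v} ≤ t * ℓ + (r + 1) / 2 := by
    intro v
    have h1 := hbal v
    rw [sum_sub_distrib, sum_boole, sum_boole, abs_le] at h1
    have h2 := hdeg v
    rw [card_filter_ends univ x' y' hxy'] at h2
    omega
  exact exists_frugal_list_coloring_of_orientation x' y' hxy' ℓ t r ((r + 1) / 2) (by omega)
    (by omega) (by omega) (fun v => (hside v).1) (fun v => (hside v).2) hdeg L hL

theorem ncard_setOf_eq_card_filter [Fintype E] (p : E → Prop) [DecidablePred p] :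
    {e | p e}.ncard = #{e | p e} := by
  rw [← Set.ncard_coe_finset]
  simp

theorem Multigraph.degree_le_maxDegree [Fintype V] (G : Multigraph V E) (v : V) :
    G.degree v ≤ G.maxDegree :=
  le_sup (f := fun v => G.degree v) (mem_univ v)

/-- A loopless multigraph of maximum degree `Δ` with `3 * Δ ≤ t * (6 * ℓ + 2)` has a
`(2 * ℓ + 1)`-frugal edge colouring from any lists of size `t`. -/
theorem Multigraph.exists_isFrugalEdgeColoring [Nonempty α] [Fintype V] [Fintype E]
    (G : Multigraph V E) (ℓ t : ℕ) (ht : 3 * G.maxDegree ≤ t * (6 * ℓ + 2)) (L : E → Finset α)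
    (hL : ∀ e, t ≤ #(L e)) :
    ∃ c : E → α, (∀ e, c e ∈ L e) ∧ G.IsFrugalEdgeColoring (2 * ℓ + 1) c := by
  have hends : ∀ e, ∃ a b, G.ends e = s(a, b) := fun e =>
    Sym2.ind (fun a b => ⟨a, b, rfl⟩) (G.ends e)
  choose x y hends using hends
  have hmem : ∀ v e, v ∈ G.ends e ↔ (x e = v ∨ y e = v) := by
    intro v e
    rw [hends, Sym2.mem_iff, eq_comm, @eq_comm _ v]
  have hxy : ∀ e, x e ≠ y e := by
    intro e he
    have := G.no_loops e
    rw [hends, Sym2.mk_isDiag_iff] at this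
    exact this he
  obtain ⟨c, hcL, hc⟩ := exists_frugal_list_coloring x y hxy ℓ t (2 * t / 3) (by omega)
    (fun v => by
      have h1 := G.degree_le_maxDegree v
      simp only [Multigraph.degree, hmem, ncard_setOf_eq_card_filter] at h1
      have h2 : t * (6 * ℓ + 2) = 6 * (t * ℓ) + 2 * t := by ring
      omega) L hL
  refine ⟨c, hcL, fun v a => ?_⟩
  simp only [hmem, ncard_setOf_eq_card_filter]
  exact hc v a

/-- A frugal edge colouring with few colours bounds the degrees. -/
theorem Multigraph.IsFrugalEdgeColoring.maxDegree_le [Fintype V] [Fintype E]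
    {G : Multigraph V E} {k n : ℕ} {c : E → ℕ} (hc : G.IsFrugalEdgeColoring k c)
    (hcn : ∀ e, c e < n) : G.maxDegree ≤ k * n := by
  refine Finset.sup_le fun v _ => ?_
  rw [Multigraph.degree, ncard_setOf_eq_card_filter]
  have h := card_le_mul_card_image_of_maps_to (s := {e | v ∈ G.ends e}) (t := range n) (f := c)
    (fun e _ => mem_range.2 (hcn e)) k fun a _ => by
      have h := hc v a
      rwa [ncard_setOf_eq_card_filter, ← filter_filter] at h
  rwa [card_range] at h

end

/-- For a finite multigraph `G` and an odd positive integer `k`,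
`⌈Δ(G)/k⌉ ≤ χ'_k(G) ≤ ch'_k(G) ≤ ⌈3Δ(G)/(3k - 1)⌉`
(ceilings written `(a + b - 1)/b`). -/
theorem frugal_edge_odd {V E : Type*} [Fintype V] [Fintype E] (G : Multigraph V E)
    (k : ℕ) (hk : 0 < k) (hko : Odd k) :
    (G.maxDegree + k - 1) / k ≤ G.frugalChromaticIndex k ∧
    G.frugalChromaticIndex k ≤ G.frugalEdgeChoiceNumber k ∧
    G.frugalEdgeChoiceNumber k ≤ (3 * G.maxDegree + (3 * k - 1) - 1) / (3 * k - 1) := by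
  obtain ⟨ℓ, rfl⟩ := hko
  have hchoice : (3 * G.maxDegree + (3 * (2 * ℓ + 1) - 1) - 1) / (3 * (2 * ℓ + 1) - 1) ∈
      {t : ℕ | ∀ L : E → Finset ℤ, (∀ e, (L e).card = t) →
        ∃ c : E → ℤ, (∀ e, c e ∈ L e) ∧ G.IsFrugalEdgeColoring (2 * ℓ + 1) c} := by
    intro L hL
    refine G.exists_isFrugalEdgeColoring ℓ _ ?_ L fun e => (hL e).ge
    have hden : 3 * (2 * ℓ + 1) - 1 = 6 * ℓ + 2 := by omega
    rw [hden, mul_comm _ (6 * ℓ + 2)]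
    have hdiv := Nat.div_add_mod (3 * G.maxDegree + (6 * ℓ + 2) - 1) (6 * ℓ + 2)
    have hmod := Nat.mod_lt (3 * G.maxDegree + (6 * ℓ + 2) - 1) (y := 6 * ℓ + 2) (by omega)
    omega
  have hindex : G.frugalEdgeChoiceNumber (2 * ℓ + 1) ∈
      {n : ℕ | ∃ c : E → ℕ, (∀ e, c e < n) ∧ G.IsFrugalEdgeColoring (2 * ℓ + 1) c} := by
    obtain ⟨c, hcL, hc⟩ := Nat.sInf_mem ⟨_, hchoice⟩
      (fun _ => Finset.Ico 0 (G.frugalEdgeChoiceNumber (2 * ℓ + 1) : ℤ))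
      (fun _ => by simp [Multigraph.frugalEdgeChoiceNumber])
    have hcL' : ∀ e, 0 ≤ c e ∧ c e < G.frugalEdgeChoiceNumber (2 * ℓ + 1) := fun e =>
      Finset.mem_Ico.1 (hcL e)
    refine ⟨fun e => (c e).toNat, fun e => ?_, fun v a => ?_⟩
    · have := hcL' e
      beta_reduce
      omega
    · have hca : ∀ e, (c e).toNat = a ↔ c e = a := fun e => by
        have := hcL' e
        omega
      simpa only [hca] using hc v a
  refine ⟨?_, Nat.sInf_le hindex, Nat.sInf_le hchoice⟩
  obtain ⟨c, hcn, hc⟩ := Nat.sInf_mem ⟨_, hindex⟩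
  have hdeg := hc.maxDegree_le hcn
  rw [Nat.div_le_iff_le_mul_add_pred hk]
  rw [Multigraph.frugalChromaticIndex]
  omega
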